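/- Let D′ ⋐ D ⊂ ℝ^{2n+1} be bounded open sets, let s > 2n + 4 be an integer, and let p ≥ 1. Then there exists a constant C > 0 such that for all smooth functions f₁,…,f_p : cl(D) → ℝ one has ‖f₁⋯f_p‖_{D′,s} ≤ C Σ_{j=1}^p ( ‖f_j‖_{D,s} · Π_{i ≠ j} ‖f_i‖_{D,s−1} ). -/

import Mathlib

open MeasureTheory Bornology

noncomputable section

variable {E : Type*} [NormedAddCommGroup E] [NormedSpace ℝ E]

/-- The standard contact form `η₀ = dx^{2n+1} - Σ x^{n+j} dx^j` on `ℝ^{2n+1}`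
(0-indexed coordinates): `η₀(x)(v) = v_{2n} - Σ_{j<n} x_{n+j} v_j`. -/
def eta0 (n : ℕ) (x v : Fin (2*n+1) → ℝ) : ℝ :=
  v ⟨2*n, by omega⟩ -
    ∑ j : Fin n, x ⟨n + j, by have := j.2; omega⟩ * v ⟨j, by have := j.2; omega⟩

/-- `dη₀ = Σ_{j<n} dx^j ∧ dx^{n+j}`. -/
def dEta0 (n : ℕ) (u v : Fin (2*n+1) → ℝ) : ℝ :=
  ∑ j : Fin n,
    (u ⟨j, by have := j.2; omega⟩ * v ⟨n + j, by have := j.2; omega⟩ -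
     u ⟨n + j, by have := j.2; omega⟩ * v ⟨j, by have := j.2; omega⟩)

/-- The horizontal vector fields: for `j < n`, `X_j = ∂_j + x_{n+j} ∂_{2n}`;
for `n ≤ j < 2n`, `X_j = ∂_j` (0-indexed). -/
def Xvec (n : ℕ) (j : Fin (2*n)) (x : Fin (2*n+1) → ℝ) : Fin (2*n+1) → ℝ :=
  if h : (j : ℕ) < n then
    (Pi.single (⟨j, by omega⟩ : Fin (2*n+1)) 1 : Fin (2*n+1) → ℝ)
      + x ⟨n + j, by omega⟩ • (Pi.single (⟨2*n, by omega⟩ : Fin (2*n+1)) 1 : Fin (2*n+1) → ℝ)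
  else
    (Pi.single (⟨j, by have := j.2; omega⟩ : Fin (2*n+1)) 1 : Fin (2*n+1) → ℝ)

/-- The horizontal derivative `X_j f`. -/
def hDeriv (n : ℕ) (j : Fin (2*n)) (f : (Fin (2*n+1) → ℝ) → E)
    (x : Fin (2*n+1) → ℝ) : E :=
  fderiv ℝ f x (Xvec n j x)

/-- Iterated horizontal derivative `X_I f = X_{i₁} ⋯ X_{i_t} f`. -/
def XI (n : ℕ) : List (Fin (2*n)) → ((Fin (2*n+1) → ℝ) → E) → ((Fin (2*n+1) → ℝ) → E)
  | [], f => f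
  | j :: I, f => hDeriv n j (XI n I f)

/-- Squared Folland–Stein norm `‖f‖_{D,s}² = Σ_{|I| ≤ s} ∫_D ‖X_I f‖²`. -/
def fsNormSq (n : ℕ) (D : Set (Fin (2*n+1) → ℝ)) (s : ℕ)
    (f : (Fin (2*n+1) → ℝ) → E) : ℝ :=
  ∑ t ∈ Finset.range (s+1), ∑ I : Fin t → Fin (2*n),
    ∫ x in D, ‖XI n (List.ofFn I) f x‖^2

/-- The Folland–Stein norm `‖f‖_{D,s}`. -/
def fsNorm (n : ℕ) (D : Set (Fin (2*n+1) → ℝ)) (s : ℕ)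
    (f : (Fin (2*n+1) → ℝ) → E) : ℝ :=
  Real.sqrt (fsNormSq n D s f)

/-- Ordinary partial derivative `∂_i f`. -/
def pDeriv (n : ℕ) (i : Fin (2*n+1)) (f : (Fin (2*n+1) → ℝ) → E)
    (x : Fin (2*n+1) → ℝ) : E :=
  fderiv ℝ f x (Pi.single i 1 : Fin (2*n+1) → ℝ)

/-- Iterated ordinary partial derivative. -/
def pI (n : ℕ) : List (Fin (2*n+1)) → ((Fin (2*n+1) → ℝ) → E) → ((Fin (2*n+1) → ℝ) → E)
  | [], f => f
  | i :: I, f => pDeriv n i (pI n I f)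

/-- The Reeb derivative `T₀ f = ∂_{2n} f` (0-indexed). -/
def T0Deriv (n : ℕ) (f : (Fin (2*n+1) → ℝ) → E) (x : Fin (2*n+1) → ℝ) : E :=
  fderiv ℝ f x (Pi.single (⟨2*n, by omega⟩ : Fin (2*n+1)) 1 : Fin (2*n+1) → ℝ)

/-- `X` is a contact vector field on `D`:  `dη₀(X, X_j) + X_j(η₀(X)) = 0` for all
horizontal `X_j`. -/
def IsContactVF (n : ℕ) (D : Set (Fin (2*n+1) → ℝ))
    (X : (Fin (2*n+1) → ℝ) → (Fin (2*n+1) → ℝ)) : Prop :=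
  ∀ j : Fin (2*n), ∀ x ∈ D,
    dEta0 n (X x) (Xvec n j x) + hDeriv n j (fun y => eta0 n y (X y)) x = 0

/-- The contact vector field with generating function `g`:
`X_g = g T₀ + Σ_j (-(X_{n+j} g) X_j + (X_j g) X_{n+j})`. -/
def genVF (n : ℕ) (g : (Fin (2*n+1) → ℝ) → ℝ) (x : Fin (2*n+1) → ℝ) :
    Fin (2*n+1) → ℝ :=
  g x • (Pi.single (⟨2*n, by omega⟩ : Fin (2*n+1)) 1 : Fin (2*n+1) → ℝ)
  + ∑ j : Fin n,
      (-(hDeriv n (⟨n + j, by have := j.2; omega⟩ : Fin (2*n)) g x) •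
          Xvec n (⟨j, by have := j.2; omega⟩ : Fin (2*n)) x
        + (hDeriv n (⟨j, by have := j.2; omega⟩ : Fin (2*n)) g x) •
          Xvec n (⟨n + j, by have := j.2; omega⟩ : Fin (2*n)) x)


open Set Function Topology
open scoped ENNReal

/-- Smooth compactly supported functions. -/
def TS (n : ℕ) (u : (Fin (2*n+1) → ℝ) → ℝ) : Prop :=
  ContDiff ℝ (⊤:ℕ∞) u ∧ HasCompactSupport u

/-- Pointwise sum of squares of horizontal derivatives up to order `k`. -/
def eN (n : ℕ) : ℕ → ((Fin (2*n+1) → ℝ) → ℝ) → (Fin (2*n+1) → ℝ) → ℝ≥0∞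
  | 0, f => fun x => ‖f x‖ₑ ^ 2
  | k+1, f => fun x => ‖f x‖ₑ ^ 2 + ∑ j, eN n k (hDeriv n j f) x

/-- The last index. -/
def lst (n : ℕ) : Fin (2*n+1) := ⟨2*n, by omega⟩

lemma Xvec_contDiff (n : ℕ) (j : Fin (2*n)) : ContDiff ℝ (⊤:ℕ∞) (Xvec n j) := by
  unfold Xvec
  split_ifs
  · fun_prop
  · fun_prop

lemma TS.hDeriv {n : ℕ} {u : (Fin (2*n+1) → ℝ) → ℝ} (hu : TS n u) (j : Fin (2*n)) :
    TS n (hDeriv n j u) := by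
  refine ⟨?_, ?_⟩
  · have h1 : ContDiff ℝ (⊤:ℕ∞) (fderiv ℝ u) := hu.1.fderiv_right (by simp)
    exact h1.clm_apply (Xvec_contDiff n j)
  · have h2 := hu.2.fderiv (𝕜 := ℝ)
    refine h2.mono' ?_
    refine subset_trans ?_ subset_closure
    intro x hx
    simp only [mem_support, ne_eq, _root_.hDeriv] at hx ⊢
    intro h
    rw [h] at hx
    simp at hx

lemma TS.mul {n : ℕ} {u v : (Fin (2*n+1) → ℝ) → ℝ} (hu : TS n u) (hv : TS n v) :
    TS n (fun x => u x * v x) :=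
  ⟨hu.1.mul hv.1, hu.2.mul_right⟩

lemma TS.meas {n : ℕ} {u : (Fin (2*n+1) → ℝ) → ℝ} (hu : TS n u) :
    Measurable (fun x => ‖u x‖ₑ ^ 2) := by
  have := hu.1.continuous
  have h2 : Measurable u := this.measurable
  fun_prop

lemma eN_meas {n : ℕ} (k : ℕ) {u : (Fin (2*n+1) → ℝ) → ℝ} (hu : TS n u) :
    Measurable (eN n k u) := by
  induction k generalizing u with
  | zero => exact hu.meas
  | succ k ih =>
    exact hu.meas.add (Finset.measurable_sum _ fun j _ => ih (hu.hDeriv j))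

lemma eN_base {n : ℕ} (k : ℕ) (u : (Fin (2*n+1) → ℝ) → ℝ) (x) : ‖u x‖ₑ ^ 2 ≤ eN n k u x := by
  cases k with
  | zero => exact le_rfl
  | succ k => exact le_self_add

lemma eN_mono {n : ℕ} {k l : ℕ} (h : k ≤ l) (u : (Fin (2*n+1) → ℝ) → ℝ) (x) :
    eN n k u x ≤ eN n l u x := by
  induction k generalizing u l with
  | zero => exact eN_base l u x
  | succ k ih =>
    obtain ⟨l, rfl⟩ : ∃ m, l = m + 1 := ⟨l-1, by omega⟩
    simp only [eN]
    gcongr with j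
    exact ih (by omega) _

lemma eN_hDeriv {n : ℕ} (k : ℕ) (j) (u : (Fin (2*n+1) → ℝ) → ℝ) (x) :
    eN n k (hDeriv n j u) x ≤ eN n (k+1) u x := by
  simp only [eN]
  refine le_trans ?_ le_add_self
  exact Finset.single_le_sum (f := fun j => eN n k (hDeriv n j u) x) (fun _ _ => zero_le) (Finset.mem_univ j)

lemma enorm_sq_add_le (a b : ℝ) : ‖a + b‖ₑ ^ 2 ≤ 2 * (‖a‖ₑ ^ 2 + ‖b‖ₑ ^ 2) := by
  have h : (a+b)^2 ≤ 2 * (a^2+b^2) := by nlinarith [sq_nonneg (a-b)]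
  have e : ∀ c : ℝ, ‖c‖ₑ ^ 2 = ENNReal.ofReal (c^2) := fun c => by
    rw [Real.enorm_eq_ofReal_abs, ← ENNReal.ofReal_pow (abs_nonneg _), sq_abs]
  rw [e, e, e, ← ENNReal.ofReal_add (by positivity) (by positivity)]
  rw [show (2:ℝ≥0∞) = ENNReal.ofReal 2 by simp, ← ENNReal.ofReal_mul (by norm_num)]
  exact ENNReal.ofReal_le_ofReal h

lemma hDeriv_add {n : ℕ} (j) {u v : (Fin (2*n+1) → ℝ) → ℝ} {x} (hu : DifferentiableAt ℝ u x)
    (hv : DifferentiableAt ℝ v x) :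
    hDeriv n j (fun y => u y + v y) x = hDeriv n j u x + hDeriv n j v x := by
  unfold hDeriv
  rw [fderiv_fun_add hu hv]; rfl

lemma hDeriv_mul {n : ℕ} (j) {u v : (Fin (2*n+1) → ℝ) → ℝ} {x} (hu : DifferentiableAt ℝ u x)
    (hv : DifferentiableAt ℝ v x) :
    hDeriv n j (fun y => u y * v y) x = hDeriv n j u x * v x + u x * hDeriv n j v x := by
  unfold hDeriv
  rw [fderiv_fun_mul hu hv]; simp; ring

lemma TS.diff {n : ℕ} {u : (Fin (2*n+1) → ℝ) → ℝ} (hu : TS n u) (x) : DifferentiableAt ℝ u x :=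
  (hu.1.differentiable (by simp)) x

lemma eN_add {n : ℕ} (k : ℕ) {u v : (Fin (2*n+1) → ℝ) → ℝ} (hu : TS n u) (hv : TS n v) (x) :
    eN n k (fun y => u y + v y) x ≤ 2 * (eN n k u x + eN n k v x) := by
  induction k generalizing u v with
  | zero => exact enorm_sq_add_le _ _
  | succ k ih =>
    simp only [eN]
    have h : ∀ j, hDeriv n j (fun y => u y + v y) = fun y => hDeriv n j u y + hDeriv n j v y :=
      fun j => funext fun y => hDeriv_add j (hu.diff y) (hv.diff y)
    simp only [h]
    calc _ ≤ 2 * (‖u x‖ₑ ^ 2 + ‖v x‖ₑ ^ 2)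
          + ∑ j, 2 * (eN n k (_root_.hDeriv n j u) x + eN n k (_root_.hDeriv n j v) x) := by
          gcongr with j
          · exact enorm_sq_add_le _ _
          · exact ih (hu.hDeriv j) (hv.hDeriv j)
      _ = _ := by
          rw [← Finset.mul_sum, Finset.sum_add_distrib]; ring

/-- One-dimensional estimate. -/
lemma one_dim {n : ℕ} {u : (Fin (2*n+1) → ℝ) → ℝ} (hu : TS n u) (y v : Fin (2*n+1) → ℝ)
    (hv : v ≠ 0) :
    ‖u y‖ₑ ^ 2 ≤ ∫⁻ a : ℝ, (‖u (y + a • v)‖ₑ ^ 2 + ‖fderiv ℝ u (y + a • v) v‖ₑ ^ 2) := by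
  set φ : ℝ → ℝ := fun a => u (y + a • v) with hφ
  have hc : HasCompactSupport φ := by
    have e1 : IsClosedEmbedding (fun a : ℝ => y + a • v) :=
      (Homeomorph.addLeft y).isClosedEmbedding.comp (isClosedEmbedding_smul_left hv)
    exact hu.2.comp_isClosedEmbedding e1
  have hd : ∀ a, HasDerivAt φ (fderiv ℝ u (y + a • v) v) a := by
    intro a
    have h1 : HasDerivAt (fun a : ℝ => y + a • v) v a := by
      simpa using ((hasDerivAt_id a).smul_const v).const_add y
    exact (hu.diff _).hasFDerivAt.comp_hasDerivAt a h1
  have hs : ContDiff ℝ 1 φ := by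
    have : ContDiff ℝ 1 u := hu.1.of_le (by exact_mod_cast le_top)
    fun_prop
  have key := HasCompactSupport.enorm_le_lintegral_Ici_deriv (f := fun a => φ a * φ a)
    (hs.mul hs) (hc.mul_right) 0
  have h0 : ‖u y‖ₑ ^ 2 = ‖φ 0 * φ 0‖ₑ := by
    rw [enorm_mul, sq]; simp [hφ]
  rw [h0]
  refine key.trans ((lintegral_mono' Measure.restrict_le_self le_rfl).trans ?_)
  refine lintegral_mono fun a => ?_
  have : deriv (fun a => φ a * φ a) a = 2 * (φ a * fderiv ℝ u (y + a • v) v) := by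
    exact ((hd a).mul (hd a)).deriv.trans (by ring)
  rw [this]
  have e : ∀ c : ℝ, ‖c‖ₑ ^ 2 = ENNReal.ofReal (c^2) := fun c => by
    rw [Real.enorm_eq_ofReal_abs, ← ENNReal.ofReal_pow (abs_nonneg _), sq_abs]
  rw [e, e, ← ENNReal.ofReal_add (by positivity) (by positivity), Real.enorm_eq_ofReal_abs]
  apply ENNReal.ofReal_le_ofReal
  change |2 * (φ a * _)| ≤ φ a ^ 2 + _
  rw [abs_le]
  generalize fderiv ℝ u (y + a • v) v = q
  constructor <;> nlinarith [sq_nonneg (φ a - q), sq_nonneg (φ a + q)]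

/-- Index of the coordinate associated with `X_j`. -/
def bj (n : ℕ) (j : Fin (2*n)) : Fin (2*n+1) := ⟨j, by omega⟩

/-- Coefficient of the vertical direction in `X_j`. -/
def cc (n : ℕ) (j : Fin (2*n)) (x : Fin (2*n+1) → ℝ) : ℝ :=
  if h : (j : ℕ) < n then x ⟨n + j, by omega⟩ else 0

lemma Xvec_eq (n : ℕ) (j : Fin (2*n)) (x : Fin (2*n+1) → ℝ) :
    Xvec n j x = Pi.single (bj n j) 1 + cc n j x • Pi.single (lst n) 1 := by
  unfold Xvec cc bj lst
  split_ifs with h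
  · rfl
  · simp

lemma bj_ne (n : ℕ) (j : Fin (2*n)) : bj n j ≠ lst n := by
  intro h
  have := congrArg Fin.val h
  simp [bj, lst] at this
  omega

lemma cc_congr (n : ℕ) (j : Fin (2*n)) {x y : Fin (2*n+1) → ℝ}
    (h : ∀ i, i ≠ bj n j → i ≠ lst n → x i = y i) : cc n j x = cc n j y := by
  unfold cc
  split_ifs with hj
  · apply h
    · simp [bj, Fin.ext_iff]; omega
    · simp [lst, Fin.ext_iff]; omega
  · rfl

lemma one_step {n : ℕ} {u : (Fin (2*n+1) → ℝ) → ℝ} (hu : TS n u) (j : Fin (2*n))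
    (x : Fin (2*n+1) → ℝ) :
    ∫⁻ t : ℝ, ‖u (update x (lst n) t)‖ₑ ^ 2 ≤
      ∫⁻ τ : ℝ, ∫⁻ t : ℝ, (‖u (update (update x (bj n j) τ) (lst n) t)‖ₑ ^ 2
        + ‖hDeriv n j u (update (update x (bj n j) τ) (lst n) t)‖ₑ ^ 2) := by
  set h : (Fin (2*n+1) → ℝ) → ℝ≥0∞ := fun z => ‖u z‖ₑ ^ 2 + ‖hDeriv n j u z‖ₑ ^ 2 with hh
  have hm : Measurable h := hu.meas.add (hu.hDeriv j).meas
  set c := cc n j x with hc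
  set v : Fin (2*n+1) → ℝ := Pi.single (bj n j) 1 + c • Pi.single (lst n) 1 with hv
  have hv0 : v ≠ 0 := by
    intro h0
    have := congrFun h0 (bj n j)
    simp [hv, bj_ne] at this
  have hX : ∀ t a : ℝ, Xvec n j (update x (lst n) t + a • v) = v := by
    intro t a
    rw [Xvec_eq, hv]
    congr 2
    apply cc_congr
    intro i h1 h2
    simp [h1, h2]
  have hpt : ∀ t a : ℝ, update x (lst n) t + a • v
      = update (update x (bj n j) (x (bj n j) + a)) (lst n) (t + a * c) := by
    intro t a
    ext i
    by_cases h2 : i = lst n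
    · subst h2
      simp [hv, (bj_ne n j).symm]
    · by_cases h1 : i = bj n j
      · subst h1
        simp [hv, h2]
      · simp [hv, h1, h2]
  calc ∫⁻ t : ℝ, ‖u (update x (lst n) t)‖ₑ ^ 2
      ≤ ∫⁻ t : ℝ, ∫⁻ a : ℝ, h (update x (lst n) t + a • v) := by
        refine lintegral_mono fun t => ?_
        refine (one_dim hu (update x (lst n) t) v hv0).trans_eq ?_
        refine lintegral_congr fun a => ?_
        simp only [hh, _root_.hDeriv, hX]
    _ = ∫⁻ a : ℝ, ∫⁻ t : ℝ, h (update x (lst n) t + a • v) := by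
        refine lintegral_lintegral_swap ?_
        refine Measurable.aemeasurable (hm.comp ?_)
        have : Continuous (fun p : ℝ × ℝ => update x (lst n) p.1 + p.2 • v) := by fun_prop
        exact this.measurable
    _ = ∫⁻ a : ℝ, ∫⁻ t : ℝ, h (update (update x (bj n j) (x (bj n j) + a)) (lst n) t) := by
        refine lintegral_congr fun a => ?_
        simp only [hpt]
        exact lintegral_add_right_eq_self
          (fun t => h (update (update x (bj n j) (x (bj n j) + a)) (lst n) t)) (a * c)
    _ = _ := lintegral_add_left_eq_self
          (fun τ => ∫⁻ t : ℝ, h (update (update x (bj n j) τ) (lst n) t)) (x (bj n j))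

lemma core {n : ℕ} (B : Finset (Fin (2*n))) {u : (Fin (2*n+1) → ℝ) → ℝ} (hu : TS n u)
    (x : Fin (2*n+1) → ℝ) :
    ∫⁻ t : ℝ, ‖u (update x (lst n) t)‖ₑ ^ 2 ≤ 2 ^ B.card *
      lmarginal (fun _ => (volume : Measure ℝ)) (insert (lst n) (B.image (bj n)))
        (eN n B.card u) x := by
  classical
  induction B using Finset.induction_on generalizing u x with
  | empty =>
    simp [lmarginal_singleton, eN]
  | insert j B hj ih =>
    have hnot : bj n j ∉ insert (lst n) (B.image (bj n)) := by
      simp only [Finset.mem_insert, bj_ne, Finset.mem_image, false_or, not_exists, not_and]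
      intro i hi h
      have : i = j := by
        have := congrArg Fin.val h
        exact Fin.ext this
      exact hj (this ▸ hi)
    have hset : insert (lst n) ((insert j B).image (bj n))
        = insert (bj n j) (insert (lst n) (B.image (bj n))) := by
      rw [Finset.image_insert, Finset.insert_comm]
    rw [hset, lmarginal_insert _ (eN_meas _ hu) hnot, Finset.card_insert_of_notMem hj]
    rw [← lintegral_const_mul' _ _ (by simp)]
    refine (one_step hu j x).trans (lintegral_mono fun τ => ?_)
    have hmu : Measurable fun t : ℝ => update (update x (bj n j) τ) (lst n) t :=
      measurable_update _
    have hmm : Measurable fun t : ℝ => ‖u (update (update x (bj n j) τ) (lst n) t)‖ₑ ^ 2 :=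
      hu.meas.comp hmu
    rw [lintegral_add_left hmm]
    refine (add_le_add (ih hu _) (ih (hu.hDeriv j) _)).trans ?_
    rw [pow_succ, mul_assoc, ← mul_add, two_mul (lmarginal _ _ _ _)]
    gcongr
    · exact lmarginal_mono (fun z => eN_mono (by omega) u z) _
    · exact lmarginal_mono (fun z => eN_hDeriv _ j u z) _

lemma fderiv_hDeriv {n : ℕ} {u : (Fin (2*n+1) → ℝ) → ℝ} (hu : TS n u) (j : Fin (2*n)) (x v) :
    fderiv ℝ (hDeriv n j u) x v =
      fderiv ℝ (fderiv ℝ u) x v (Xvec n j x) + fderiv ℝ u x (fderiv ℝ (Xvec n j) x v) := by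
  have h1 : ContDiff ℝ (⊤:ℕ∞) (fderiv ℝ u) := hu.1.fderiv_right (by simp)
  have h2 := Xvec_contDiff n j
  have d1 := (h1.differentiable (by simp)) x
  have d2 := (h2.differentiable (by simp)) x
  have : hDeriv n j u = fun y => fderiv ℝ u y (Xvec n j y) := rfl
  rw [this, fderiv_clm_apply d1 d2]
  simp [add_comm]

lemma commT {n : ℕ} (hn : 1 ≤ n) {u : (Fin (2*n+1) → ℝ) → ℝ} (hu : TS n u) (x) :
    fderiv ℝ u x (Pi.single (lst n) 1) =
      hDeriv n ⟨n, by omega⟩ (hDeriv n ⟨0, by omega⟩ u) x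
      - hDeriv n ⟨0, by omega⟩ (hDeriv n ⟨n, by omega⟩ u) x := by
  have hsymm : ∀ v w, fderiv ℝ (fderiv ℝ u) x v w = fderiv ℝ (fderiv ℝ u) x w v := by
    intro v w
    have : IsSymmSndFDerivAt ℝ u x := by
      apply ContDiffAt.isSymmSndFDerivAt (n := (⊤:ℕ∞)) hu.1.contDiffAt
      rw [minSmoothness_of_isRCLikeNormedField]
      exact WithTop.coe_le_coe.2 le_top
    exact this v w
  have e1 : hDeriv n ⟨n, by omega⟩ (hDeriv n ⟨0, by omega⟩ u) x
    = fderiv ℝ (hDeriv n ⟨0, by omega⟩ u) x (Xvec n ⟨n, by omega⟩ x) := rfl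
  have e2 : hDeriv n ⟨0, by omega⟩ (hDeriv n ⟨n, by omega⟩ u) x
    = fderiv ℝ (hDeriv n ⟨n, by omega⟩ u) x (Xvec n ⟨0, by omega⟩ x) := rfl
  rw [e1, e2, fderiv_hDeriv hu, fderiv_hDeriv hu, hsymm]
  have c1 : Xvec n ⟨n, by omega⟩ = fun _ => Pi.single (⟨n, by omega⟩ : Fin (2*n+1)) (1:ℝ) := by
    funext y; simp [Xvec]
  have c2 : ∀ v, fderiv ℝ (Xvec n ⟨0, by omega⟩) x v
      = v ⟨n, by omega⟩ • Pi.single (lst n) (1:ℝ) := by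
    intro v
    have : Xvec n ⟨0, by omega⟩ = fun y => (Pi.single (⟨0, by omega⟩ : Fin (2*n+1)) (1:ℝ) :
        Fin (2*n+1) → ℝ) + y ⟨n, by omega⟩ • Pi.single (lst n) (1:ℝ) := by
      funext y
      simp [Xvec, show 0 < n by omega, lst]
    rw [this]
    have hd : HasFDerivAt (fun y : Fin (2*n+1) → ℝ =>
        (Pi.single (⟨0, by omega⟩ : Fin (2*n+1)) (1:ℝ) :
        Fin (2*n+1) → ℝ) + y ⟨n, by omega⟩ • (Pi.single (lst n) (1:ℝ) : Fin (2*n+1) → ℝ))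
        ((ContinuousLinearMap.proj (R := ℝ) (φ := fun _ : Fin (2*n+1) => ℝ)
          (⟨n, by omega⟩ : Fin (2*n+1))).smulRight (Pi.single (lst n) (1:ℝ))) x := by
      apply HasFDerivAt.const_add
      exact (ContinuousLinearMap.proj (R := ℝ) (φ := fun _ : Fin (2*n+1) => ℝ)
          (⟨n, by omega⟩ : Fin (2*n+1))).hasFDerivAt.smul_const _
    rw [hd.fderiv]
    simp
  rw [c2, c1]
  simp

lemma pt {n : ℕ} (hn : 1 ≤ n) (B : Finset (Fin (2*n))) {u : (Fin (2*n+1) → ℝ) → ℝ} (hu : TS n u)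
    (x : Fin (2*n+1) → ℝ) :
    ‖u x‖ₑ ^ 2 ≤ 5 * 2 ^ B.card *
      lmarginal (fun _ => (volume : Measure ℝ)) (insert (lst n) (B.image (bj n)))
        (eN n (B.card + 2) u) x := by
  set w1 := hDeriv n ⟨n, by omega⟩ (hDeriv n ⟨0, by omega⟩ u) with hw1
  set w2 := hDeriv n ⟨0, by omega⟩ (hDeriv n ⟨n, by omega⟩ u) with hw2
  have t1 : TS n w1 := (hu.hDeriv _).hDeriv _
  have t2 : TS n w2 := (hu.hDeriv _).hDeriv _
  have hmu : Measurable fun t : ℝ => update x (lst n) t := measurable_update _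
  have m0 : Measurable fun t : ℝ => ‖u (update x (lst n) t)‖ₑ ^ 2 := hu.meas.comp hmu
  have m1 : Measurable fun t : ℝ => ‖w1 (update x (lst n) t)‖ₑ ^ 2 := t1.meas.comp hmu
  have hpt : ∀ a : ℝ, x + a • Pi.single (lst n) (1:ℝ) = update x (lst n) (x (lst n) + a) := by
    intro a
    ext i
    by_cases h : i = lst n
    · subst h; simp
    · simp [h]
  have h2 : ∀ z, ‖fderiv ℝ u z (Pi.single (lst n) 1)‖ₑ ^ 2 ≤ 2 * (‖w1 z‖ₑ ^ 2 + ‖w2 z‖ₑ ^ 2) := by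
    intro z
    rw [commT hn hu z, sub_eq_add_neg]
    refine (enorm_sq_add_le _ _).trans_eq ?_
    simp [hw1, hw2]
  set M := lmarginal (fun _ => (volume : Measure ℝ)) (insert (lst n) (B.image (bj n)))
        (eN n (B.card + 2) u) x with hM
  have b0 := (core B hu x).trans (mul_le_mul_right (lmarginal_mono
    (fun z => eN_mono (l := B.card + 2) (by omega) u z) x) _)
  have b1 := (core B t1 x).trans (mul_le_mul_right (lmarginal_mono
    (fun z => (eN_hDeriv _ _ _ z).trans (eN_hDeriv (B.card+1) _ u z)) x) _)
  have b2 := (core B t2 x).trans (mul_le_mul_right (lmarginal_mono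
    (fun z => (eN_hDeriv _ _ _ z).trans (eN_hDeriv (B.card+1) _ u z)) x) _)
  calc ‖u x‖ₑ ^ 2 ≤ ∫⁻ a : ℝ, (‖u (x + a • Pi.single (lst n) (1:ℝ))‖ₑ ^ 2
        + ‖fderiv ℝ u (x + a • Pi.single (lst n) (1:ℝ)) (Pi.single (lst n) (1:ℝ))‖ₑ ^ 2) :=
        one_dim hu x _ (by simp)
    _ ≤ ∫⁻ a : ℝ, (fun t => (‖u (update x (lst n) t)‖ₑ ^ 2 +
          2 * (‖w1 (update x (lst n) t)‖ₑ ^ 2 + ‖w2 (update x (lst n) t)‖ₑ ^ 2)))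
            (x (lst n) + a) := by
        refine lintegral_mono fun a => ?_
        simp only [← hpt]
        gcongr
        exact h2 _
    _ = ∫⁻ t : ℝ, (‖u (update x (lst n) t)‖ₑ ^ 2 +
          2 * (‖w1 (update x (lst n) t)‖ₑ ^ 2 + ‖w2 (update x (lst n) t)‖ₑ ^ 2)) :=
        lintegral_add_left_eq_self (fun t => (‖u (update x (lst n) t)‖ₑ ^ 2 +
          2 * (‖w1 (update x (lst n) t)‖ₑ ^ 2 + ‖w2 (update x (lst n) t)‖ₑ ^ 2))) _
    _ = (∫⁻ t : ℝ, ‖u (update x (lst n) t)‖ₑ ^ 2) +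
          2 * ((∫⁻ t : ℝ, ‖w1 (update x (lst n) t)‖ₑ ^ 2) +
            ∫⁻ t : ℝ, ‖w2 (update x (lst n) t)‖ₑ ^ 2) := by
        rw [lintegral_add_left m0, lintegral_const_mul' _ _ (by simp), lintegral_add_left m1]
    _ ≤ 2 ^ B.card * M + 2 * (2 ^ B.card * M + 2 ^ B.card * M) := by
        gcongr
    _ = _ := by ring

/-- Global squared norm. -/
def eQ (n k : ℕ) (u : (Fin (2*n+1) → ℝ) → ℝ) : ℝ≥0∞ := ∫⁻ x, eN n k u x

lemma marg_const_mul {n : ℕ} {μ : Fin (2*n+1) → Measure ℝ} {S : Finset (Fin (2*n+1))} (c : ℝ≥0∞)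
    {f : (Fin (2*n+1) → ℝ) → ℝ≥0∞} (hf : Measurable f) (x : Fin (2*n+1) → ℝ) :
    lmarginal μ S (fun z => c * f z) x = c * lmarginal μ S f x :=
  lintegral_const_mul c (hf.comp measurable_updateFinset)

lemma bilin_aux {n : ℕ} (hn : 1 ≤ n) (B : Finset (Fin (2*n))) {u v : (Fin (2*n+1) → ℝ) → ℝ}
    (hu : TS n u) (hv : TS n v) :
    ∫⁻ x, ‖u x * v x‖ₑ ^ 2 ≤
      (5 * 2 ^ B.card) * 2 ^ (Bᶜ).card * eQ n (B.card + 2) u * eQ n (Bᶜ).card v := by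
  classical
  set μ : Fin (2*n+1) → Measure ℝ := fun _ => volume with hμ
  set A := B.image (bj n) with hA
  set A' := (Bᶜ).image (bj n) with hA'
  have hinj : Injective (bj n) := fun a b h => by
    have h2 := congrArg Fin.val h
    exact Fin.ext h2
  have hL : ∀ S : Finset (Fin (2*n)), lst n ∉ S.image (bj n) := by
    intro S h
    obtain ⟨j, -, hj⟩ := Finset.mem_image.1 h
    exact bj_ne n j hj
  have hdis : Disjoint A A' := (Finset.disjoint_image hinj).2 disjoint_compl_right
  have huniv : A ∪ insert (lst n) A' = Finset.univ := by
    rw [Finset.eq_univ_iff_forall]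
    intro i
    by_cases h : i = lst n
    · simp [h]
    · have hi : (i : ℕ) < 2*n := by
        have := i.2
        have : (i : ℕ) ≠ 2*n := fun e => h (Fin.ext e)
        omega
      have e : i = bj n ⟨i, hi⟩ := rfl
      by_cases hB : (⟨i, hi⟩ : Fin (2*n)) ∈ B
      · exact Finset.mem_union_left _ (Finset.mem_image.2 ⟨_, hB, rfl⟩)
      · exact Finset.mem_union_right _ (Finset.mem_insert_of_mem
          (Finset.mem_image.2 ⟨_, Finset.mem_compl.2 hB, rfl⟩))
  have huniv' : A' ∪ insert (lst n) A = Finset.univ := by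
    rw [← huniv]; ext i; simp only [Finset.mem_union, Finset.mem_insert]; tauto
  have hd1 : Disjoint A (insert (lst n) A') := by
    rw [Finset.disjoint_insert_right]; exact ⟨hL B, hdis⟩
  have hd2 : Disjoint A' (insert (lst n) A) := by
    rw [Finset.disjoint_insert_right]; exact ⟨hL Bᶜ, hdis.symm⟩
  set U := lmarginal μ (insert (lst n) A) (eN n (B.card + 2) u) with hU
  set V := lmarginal μ (insert (lst n) A') (eN n (Bᶜ).card v) with hV
  have mu := eN_meas (B.card+2) hu
  have mv := eN_meas (Bᶜ).card hv
  have mU : Measurable U := mu.lmarginal μ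
  have mV : Measurable V := mv.lmarginal μ
  have x0 : Fin (2*n+1) → ℝ := 0
  have full : ∀ f : (Fin (2*n+1) → ℝ) → ℝ≥0∞, ∫⁻ x, f x = lmarginal μ Finset.univ f x0 := by
    intro f
    rw [lmarginal_univ]; rfl
  have hAV : ∀ x, lmarginal μ (insert (lst n) A) (fun z => ‖v z‖ₑ ^ 2) x
      ≤ 2 ^ (Bᶜ).card * eQ n (Bᶜ).card v := by
    intro x
    rw [lmarginal_insert' _ hv.meas (hL B)]
    calc _ ≤ lmarginal μ A (fun z => 2 ^ (Bᶜ).card * V z) x :=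
          lmarginal_mono (fun z => core Bᶜ hv z) x
      _ = 2 ^ (Bᶜ).card * lmarginal μ A V x := by
          unfold lmarginal
          rw [lintegral_const_mul' _ _ (by simp)]
      _ = _ := by
          rw [hV, ← lmarginal_union μ _ mv hd1, huniv, lmarginal_univ]; rfl
  rw [full, ← huniv']
  have mprod : Measurable fun x => ‖u x * v x‖ₑ ^ 2 := (hu.mul hv).meas
  rw [lmarginal_union μ _ mprod hd2]
  calc _ ≤ lmarginal μ A' (fun x => (5 * 2 ^ B.card * (2 ^ (Bᶜ).card * eQ n (Bᶜ).card v)) * U x) x0 := by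
        refine lmarginal_mono (fun x => ?_) x0
        calc _ ≤ lmarginal μ (insert (lst n) A) (fun z => (5 * 2 ^ B.card * U z) * ‖v z‖ₑ ^ 2) x := by
              refine lmarginal_mono (fun z => ?_) x
              change ‖u z * v z‖ₑ ^ 2 ≤ _
              rw [enorm_mul, mul_pow]
              gcongr
              exact pt hn B hu z
          _ = (5 * 2 ^ B.card * U x) * lmarginal μ (insert (lst n) A) (fun z => ‖v z‖ₑ ^ 2) x := by
              rw [← marg_const_mul _ hv.meas]
              unfold lmarginal
              refine lintegral_congr fun y => ?_
              have hc : U (updateFinset x (insert (lst n) A) y) = U x := by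
                apply lmarginal_congr
                intro i hi
                simp only [updateFinset, hi, dite_false]
              simp only [hc]
          _ ≤ (5 * 2 ^ B.card * U x) * (2 ^ (Bᶜ).card * eQ n (Bᶜ).card v) := by
              gcongr
              exact hAV x
          _ = _ := by ring
    _ = (5 * 2 ^ B.card * (2 ^ (Bᶜ).card * eQ n (Bᶜ).card v)) * lmarginal μ A' U x0 := by
        exact marg_const_mul _ mU _
    _ = (5 * 2 ^ B.card * (2 ^ (Bᶜ).card * eQ n (Bᶜ).card v)) * eQ n (B.card + 2) u := by
        rw [hU, ← lmarginal_union μ _ mu hd2, huniv', lmarginal_univ]; rfl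
    _ = _ := by ring

lemma eQ_mono {n k l : ℕ} (h : k ≤ l) (u : (Fin (2*n+1) → ℝ) → ℝ) : eQ n k u ≤ eQ n l u :=
  lintegral_mono fun x => eN_mono h u x

lemma eQ_hDeriv {n : ℕ} (k : ℕ) (j) (u : (Fin (2*n+1) → ℝ) → ℝ) :
    eQ n k (hDeriv n j u) ≤ eQ n (k+1) u :=
  lintegral_mono fun x => eN_hDeriv k j u x

lemma bilin {n : ℕ} (hn : 1 ≤ n) {u v : (Fin (2*n+1) → ℝ) → ℝ}
    (hu : TS n u) (hv : TS n v) {k l : ℕ} (h : 2*n+2 ≤ k + l) :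
    ∫⁻ x, ‖u x * v x‖ₑ ^ 2 ≤ (5 * 2 ^ (2*n)) * eQ n k u * eQ n l v := by
  have main : ∀ (u v : (Fin (2*n+1) → ℝ) → ℝ) (_ : TS n u) (_ : TS n v) (k l : ℕ)
      (_ : 2*n+2 ≤ k + l), 2 ≤ k →
      ∫⁻ x, ‖u x * v x‖ₑ ^ 2 ≤ (5 * 2 ^ (2*n)) * eQ n k u * eQ n l v := by
    intro u v hu hv k l h hk
    obtain ⟨B, -, hB⟩ := Finset.exists_subset_card_eq
      (s := (Finset.univ : Finset (Fin (2*n)))) (n := min (k-2) (2*n)) (by simp)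
    have hBc : B.card + (Bᶜ).card = 2*n := by
      rw [Finset.card_add_card_compl]; simp
    refine (bilin_aux hn B hu hv).trans ?_
    rw [mul_assoc (5:ℝ≥0∞), ← pow_add, hBc]
    gcongr
    · exact eQ_mono (by omega) u
    · exact eQ_mono (by omega) v
  by_cases hk : 2 ≤ k
  · exact main u v hu hv k l h hk
  · have := main v u hv hu l k (by omega) (by omega)
    simp only [mul_comm (v _)] at this
    refine this.trans_eq ?_
    ring

lemma eQ_succ {n : ℕ} (k : ℕ) {u : (Fin (2*n+1) → ℝ) → ℝ} (hu : TS n u) :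
    eQ n (k+1) u = (∫⁻ x, ‖u x‖ₑ ^ 2) + ∑ j, eQ n k (hDeriv n j u) := by
  unfold eQ
  simp only [eN]
  rw [lintegral_add_left hu.meas, lintegral_finsetSum _ fun j _ => eN_meas k (hu.hDeriv j)]

lemma TS.add {n : ℕ} {u v : (Fin (2*n+1) → ℝ) → ℝ} (hu : TS n u) (hv : TS n v) :
    TS n (fun x => u x + v x) :=
  ⟨hu.1.add hv.1, hu.2.add hv.2⟩

lemma eQ_add {n : ℕ} (k : ℕ) {u v : (Fin (2*n+1) → ℝ) → ℝ} (hu : TS n u) (hv : TS n v) :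
    eQ n k (fun y => u y + v y) ≤ 2 * (eQ n k u + eQ n k v) := by
  unfold eQ
  rw [← lintegral_add_left (eN_meas k hu), ← lintegral_const_mul' _ _ (by simp)]
  exact lintegral_mono fun x => eN_add k hu hv x

lemma TS.hDeriv_mul_eq {n : ℕ} {u v : (Fin (2*n+1) → ℝ) → ℝ} (hu : TS n u) (hv : TS n v) (j) :
    _root_.hDeriv n j (fun y => u y * v y)
      = fun y => _root_.hDeriv n j u y * v y + u y * _root_.hDeriv n j v y :=
  funext fun y => hDeriv_mul j (hu.diff y) (hv.diff y)

lemma prodL {n : ℕ} (hn : 1 ≤ n) (k : ℕ) : ∃ C : ℝ≥0∞, C ≠ ∞ ∧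
    ∀ u v : (Fin (2*n+1) → ℝ) → ℝ, TS n u → TS n v → ∀ a b, k ≤ a → k ≤ b → 2*n+2+k ≤ a + b →
      eQ n k (fun x => u x * v x) ≤ C * (eQ n a u * eQ n b v) := by
  induction k with
  | zero =>
    refine ⟨5 * 2 ^ (2*n), by finiteness, fun u v hu hv a b _ _ h => ?_⟩
    rw [← mul_assoc]
    exact bilin hn hu hv h
  | succ k ih =>
    obtain ⟨C, hC, H⟩ := ih
    refine ⟨5 * 2 ^ (2*n) + (2*n : ℕ) * (4 * C), by finiteness, fun u v hu hv a b ha hb h => ?_⟩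
    obtain ⟨a, rfl⟩ : ∃ m, a = m + 1 := ⟨a-1, by omega⟩
    obtain ⟨b, rfl⟩ : ∃ m, b = m + 1 := ⟨b-1, by omega⟩
    rw [eQ_succ k (hu.mul hv), add_mul]
    refine add_le_add ?_ ?_
    · rw [← mul_assoc]
      exact bilin hn hu hv (by omega)
    · have : ∀ j ∈ (Finset.univ : Finset (Fin (2*n))),
          eQ n k (hDeriv n j fun x => u x * v x) ≤ 4 * C * (eQ n (a+1) u * eQ n (b+1) v) := by
        intro j _
        rw [hu.hDeriv_mul_eq hv]
        refine (eQ_add k ((hu.hDeriv j).mul hv) (hu.mul (hv.hDeriv j))).trans ?_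
        have h1 := H _ _ (hu.hDeriv j) hv a (b+1) (by omega) (by omega) (by omega)
        have h2 := H _ _ hu (hv.hDeriv j) (a+1) b (by omega) (by omega) (by omega)
        calc _ ≤ 2 * (C * (eQ n (a+1) u * eQ n (b+1) v) + C * (eQ n (a+1) u * eQ n (b+1) v)) := by
              gcongr
              · exact h1.trans (by gcongr; exact eQ_hDeriv a j u)
              · exact h2.trans (by gcongr; exact eQ_hDeriv b j v)
          _ = _ := by ring
      refine (Finset.sum_le_sum this).trans_eq ?_
      simp
      ring

lemma prodS {n : ℕ} (hn : 1 ≤ n) (r : ℕ) (hr : 2*n+2 ≤ r) : ∃ C : ℝ≥0∞, C ≠ ∞ ∧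
    ∀ u v : (Fin (2*n+1) → ℝ) → ℝ, TS n u → TS n v →
      eQ n (r+1) (fun x => u x * v x) ≤
        C * (eQ n (r+1) u * eQ n r v + eQ n r u * eQ n (r+1) v) := by
  obtain ⟨C, hC, H⟩ := prodL hn r
  refine ⟨5 * 2 ^ (2*n) + (2*n : ℕ) * (2 * C), by finiteness, fun u v hu hv => ?_⟩
  rw [eQ_succ r (hu.mul hv), add_mul]
  refine add_le_add ?_ ?_
  · refine (bilin hn hu hv (k := r+1) (l := r) (by omega)).trans ?_
    rw [mul_assoc]
    gcongr
    exact le_self_add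
  · have : ∀ j ∈ (Finset.univ : Finset (Fin (2*n))),
        eQ n r (hDeriv n j fun x => u x * v x) ≤
          2 * C * (eQ n (r+1) u * eQ n r v + eQ n r u * eQ n (r+1) v) := by
      intro j _
      rw [hu.hDeriv_mul_eq hv]
      refine (eQ_add r ((hu.hDeriv j).mul hv) (hu.mul (hv.hDeriv j))).trans ?_
      have h1 := H _ _ (hu.hDeriv j) hv r r le_rfl le_rfl (by omega)
      have h2 := H _ _ hu (hv.hDeriv j) r r le_rfl le_rfl (by omega)
      rw [mul_assoc, mul_add C]
      gcongr
      · exact h1.trans (by gcongr; exact eQ_hDeriv r j u)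
      · exact h2.trans (by gcongr; exact eQ_hDeriv r j v)
    refine (Finset.sum_le_sum this).trans_eq ?_
    simp
    ring

lemma TS.prod {n : ℕ} {ι : Type*} [DecidableEq ι] {σ : Finset ι} (hσ : σ.Nonempty)
    {F : ι → (Fin (2*n+1) → ℝ) → ℝ} (hF : ∀ i, TS n (F i)) : TS n (fun x => ∏ i ∈ σ, F i x) := by
  induction hσ using Finset.Nonempty.cons_induction with
  | singleton a => simpa using hF a
  | cons a σ ha hσ ih =>
    simp only [Finset.prod_cons]
    exact (hF a).mul ih

lemma prodR {n : ℕ} (hn : 1 ≤ n) (r : ℕ) (hr : 2*n+2 ≤ r) {ι : Type*} [DecidableEq ι]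
    {σ : Finset ι} (hσ : σ.Nonempty) : ∃ C : ℝ≥0∞, C ≠ ∞ ∧
    ∀ F : ι → (Fin (2*n+1) → ℝ) → ℝ, (∀ i, TS n (F i)) →
      eQ n r (fun x => ∏ i ∈ σ, F i x) ≤ C * ∏ i ∈ σ, eQ n r (F i) := by
  obtain ⟨C, hC, H⟩ := prodL hn r
  induction hσ using Finset.Nonempty.cons_induction with
  | singleton a => exact ⟨1, by simp, fun F hF => by simp⟩
  | cons a σ ha hσ ih =>
    obtain ⟨C', hC', H'⟩ := ih
    refine ⟨C * C', by finiteness, fun F hF => ?_⟩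
    simp only [Finset.prod_cons]
    refine (H _ _ (hF a) (TS.prod hσ hF) r r le_rfl le_rfl (by omega)).trans ?_
    calc _ ≤ C * (eQ n r (F a) * (C' * ∏ i ∈ σ, eQ n r (F i))) := by
          gcongr
          exact H' F hF
      _ = _ := by ring

lemma prodMain {n : ℕ} (hn : 1 ≤ n) (r : ℕ) (hr : 2*n+2 ≤ r) {ι : Type*} [DecidableEq ι]
    {σ : Finset ι} (hσ : σ.Nonempty) : ∃ C : ℝ≥0∞, C ≠ ∞ ∧
    ∀ F : ι → (Fin (2*n+1) → ℝ) → ℝ, (∀ i, TS n (F i)) →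
      eQ n (r+1) (fun x => ∏ i ∈ σ, F i x) ≤
        C * ∑ j ∈ σ, eQ n (r+1) (F j) * ∏ i ∈ σ.erase j, eQ n r (F i) := by
  obtain ⟨C, hC, H⟩ := prodS hn r hr
  induction hσ using Finset.Nonempty.cons_induction with
  | singleton a => exact ⟨1, by simp, fun F hF => by simp⟩
  | cons a σ ha hσ ih =>
    obtain ⟨C', hC', H'⟩ := ih
    obtain ⟨C₂, hC₂, H₂⟩ := prodR hn r hr hσ
    refine ⟨C * (C' + C₂), by finiteness, fun F hF => ?_⟩
    have hS : ∑ j ∈ Finset.cons a σ ha, eQ n (r+1) (F j) *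
          ∏ i ∈ (Finset.cons a σ ha).erase j, eQ n r (F i)
        = eQ n (r+1) (F a) * ∏ i ∈ σ, eQ n r (F i)
          + eQ n r (F a) * ∑ j ∈ σ, eQ n (r+1) (F j) * ∏ i ∈ σ.erase j, eQ n r (F i) := by
      rw [Finset.sum_cons, Finset.mul_sum]
      congr 1
      · rw [Finset.cons_eq_insert, Finset.erase_insert ha]
      · refine Finset.sum_congr rfl fun j hj => ?_
        have hja : a ≠ j := fun h => ha (h ▸ hj)
        rw [Finset.cons_eq_insert, Finset.erase_insert_of_ne hja, Finset.prod_insert]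
        · ring
        · simp [ha]
    rw [hS]
    simp only [Finset.prod_cons]
    refine (H _ _ (hF a) (TS.prod hσ hF)).trans ?_
    have h1 := H₂ F hF
    have h2 := H' F hF
    set P := ∏ i ∈ σ, eQ n r (F i)
    set S := ∑ j ∈ σ, eQ n (r+1) (F j) * ∏ i ∈ σ.erase j, eQ n r (F i)
    calc _ ≤ C * (eQ n (r+1) (F a) * (C₂ * P) + eQ n r (F a) * (C' * S)) := by gcongr
      _ = C * (C₂ * (eQ n (r+1) (F a) * P) + C' * (eQ n r (F a) * S)) := by ring
      _ ≤ C * ((C' + C₂) * (eQ n (r+1) (F a) * P) + (C' + C₂) * (eQ n r (F a) * S)) := by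
          gcongr
          · exact le_add_self
          · exact le_self_add
      _ = _ := by ring

lemma XI_append {n : ℕ} (I : List (Fin (2*n))) (j) (f : (Fin (2*n+1) → ℝ) → ℝ) :
    XI n (I ++ [j]) f = XI n I (hDeriv n j f) := by
  induction I with
  | nil => rfl
  | cons i I ih => simp only [List.cons_append, XI, ih]

lemma fsNormSq_succ {n : ℕ} (D : Set (Fin (2*n+1) → ℝ)) (k : ℕ) (f : (Fin (2*n+1) → ℝ) → ℝ) :
    fsNormSq n D (k+1) f = (∫ x in D, ‖f x‖^2) + ∑ j, fsNormSq n D k (hDeriv n j f) := by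
  unfold fsNormSq
  rw [Finset.sum_range_succ', add_comm]
  congr 1
  · simp [XI]
  · rw [Finset.sum_comm]
    refine Finset.sum_congr rfl fun t _ => ?_
    rw [← (Fin.snocEquiv (fun _ : Fin (t+1) => Fin (2*n))).sum_comp, Fintype.sum_prod_type]
    refine Finset.sum_congr rfl fun j _ => Finset.sum_congr rfl fun I _ => ?_
    have : List.ofFn (Fin.snocEquiv (fun _ : Fin (t+1) => Fin (2*n)) (j, I))
        = List.ofFn I ++ [j] := by
      rw [List.ofFn_succ', List.concat_eq_append]
      simp [Fin.snocEquiv]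
    rw [this, XI_append]

lemma fsNormSq_zero {n : ℕ} (D : Set (Fin (2*n+1) → ℝ)) (f : (Fin (2*n+1) → ℝ) → ℝ) :
    fsNormSq n D 0 f = ∫ x in D, ‖f x‖^2 := by
  simp [fsNormSq, XI]

lemma fsNormSq_nonneg' {n : ℕ} (D : Set (Fin (2*n+1) → ℝ)) (k : ℕ) (f : (Fin (2*n+1) → ℝ) → ℝ) :
    0 ≤ fsNormSq n D k f :=
  Finset.sum_nonneg fun _ _ => Finset.sum_nonneg fun _ _ =>
    integral_nonneg fun _ => by positivity

/-- All horizontal derivatives are continuous and bounded on `D`. -/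
def Gd (n : ℕ) (D : Set (Fin (2*n+1) → ℝ)) (f : (Fin (2*n+1) → ℝ) → ℝ) : Prop :=
  ∀ I, ContinuousOn (XI n I f) D ∧ ∃ M : ℝ, ∀ x ∈ D, ‖XI n I f x‖ ≤ M

lemma Gd.hDeriv {n : ℕ} {D : Set (Fin (2*n+1) → ℝ)} {f : (Fin (2*n+1) → ℝ) → ℝ} (h : Gd n D f)
    (j) : Gd n D (hDeriv n j f) := by
  intro I
  rw [← XI_append]
  exact h _

lemma Gd.meas {n : ℕ} {D : Set (Fin (2*n+1) → ℝ)} (hD : MeasurableSet D)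
    {f : (Fin (2*n+1) → ℝ) → ℝ} (h : Gd n D f) :
    AEMeasurable (fun x => ‖f x‖ₑ ^ 2) (volume.restrict D) := by
  have := (h []).1.aemeasurable hD (μ := volume)
  exact this.enorm.pow_const 2

lemma Gd.meas' {n : ℕ} {D : Set (Fin (2*n+1) → ℝ)} (hD : MeasurableSet D) (k : ℕ)
    {f : (Fin (2*n+1) → ℝ) → ℝ} (h : Gd n D f) :
    AEMeasurable (eN n k f) (volume.restrict D) := by
  induction k generalizing f with
  | zero => exact h.meas hD
  | succ k ih =>
    exact (h.meas hD).add (Finset.aemeasurable_fun_sum _ fun j _ => ih (h.hDeriv j))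

lemma Gd.base {n : ℕ} {D : Set (Fin (2*n+1) → ℝ)} (hD : MeasurableSet D) (hb : IsBounded D)
    {f : (Fin (2*n+1) → ℝ) → ℝ} (h : Gd n D f) :
    ENNReal.ofReal (∫ x in D, ‖f x‖^2) = ∫⁻ x in D, ‖f x‖ₑ ^ 2 := by
  obtain ⟨hc, M, hM⟩ := h []
  have hc : ContinuousOn f D := hc
  have hM : ∀ x ∈ D, ‖f x‖ ≤ M := hM
  have hi : IntegrableOn (fun x => ‖f x‖^2) D := by
    refine IntegrableOn.of_bound hb.measure_lt_top
      ((hc.norm.pow 2).aestronglyMeasurable hD) (M^2) ?_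
    filter_upwards [ae_restrict_mem hD] with x hx
    rw [norm_pow, norm_norm]
    exact pow_le_pow_left₀ (norm_nonneg _) (hM x hx) 2
  rw [ofReal_integral_eq_lintegral_ofReal hi (Filter.Eventually.of_forall fun x => by positivity)]
  refine lintegral_congr fun x => ?_
  rw [ENNReal.ofReal_pow (norm_nonneg _), ofReal_norm]

lemma Gd.bridge {n : ℕ} {D : Set (Fin (2*n+1) → ℝ)} (hD : MeasurableSet D) (hb : IsBounded D)
    (k : ℕ) {f : (Fin (2*n+1) → ℝ) → ℝ} (h : Gd n D f) :
    ENNReal.ofReal (fsNormSq n D k f) = ∫⁻ x in D, eN n k f x := by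
  induction k generalizing f with
  | zero => rw [fsNormSq_zero]; exact h.base hD hb
  | succ k ih =>
    simp only [eN]
    rw [fsNormSq_succ, ENNReal.ofReal_add (integral_nonneg fun _ => by positivity)
      (Finset.sum_nonneg fun _ _ => fsNormSq_nonneg' _ _ _), h.base hD hb,
      lintegral_add_left' (h.meas hD),
      lintegral_finsetSum' _ fun j _ => (h.hDeriv j).meas' hD k,
      ENNReal.ofReal_sum_of_nonneg fun _ _ => fsNormSq_nonneg' _ _ _]
    congr 1
    exact Finset.sum_congr rfl fun j _ => ih (h.hDeriv j)

lemma TS.XI {n : ℕ} {u : (Fin (2*n+1) → ℝ) → ℝ} (hu : TS n u) (I) : TS n (XI n I u) := by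
  induction I with
  | nil => exact hu
  | cons j I ih => exact ih.hDeriv j

lemma TS.gd {n : ℕ} {u : (Fin (2*n+1) → ℝ) → ℝ} (hu : TS n u) (D) : Gd n D u := by
  intro I
  have h := hu.XI I
  obtain ⟨M, hM⟩ := h.2.exists_bound_of_continuous h.1.continuous
  exact ⟨h.1.continuous.continuousOn, M, fun x _ => hM x⟩

/-- All iterated derivatives bounded on `D`. -/
def Hd (n : ℕ) (D : Set (Fin (2*n+1) → ℝ)) (f : (Fin (2*n+1) → ℝ) → ℝ) : Prop :=
  ContDiffOn ℝ (⊤:ℕ∞) f D ∧ ∀ m : ℕ, ∃ M : ℝ, ∀ x ∈ D, ‖iteratedFDerivWithin ℝ m f D x‖ ≤ M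

lemma bdd_of_closure {n : ℕ} {D : Set (Fin (2*n+1) → ℝ)} (hD : IsOpen D) (hb : IsBounded D)
    {F : Type*} [NormedAddCommGroup F] [NormedSpace ℝ F]
    {f : (Fin (2*n+1) → ℝ) → F} (hf : ContDiffOn ℝ (⊤:ℕ∞) f (closure D)) (m : ℕ) :
    ∃ M : ℝ, ∀ x ∈ D, ‖iteratedFDerivWithin ℝ m f D x‖ ≤ M := by
  have key : ∃ M : ℝ, ∀ x ∈ closure D ∩ D, ‖iteratedFDerivWithin ℝ m f D x‖ ≤ M := by
    refine hb.isCompact_closure.induction_on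
      (p := fun S => ∃ M : ℝ, ∀ x ∈ S ∩ D, ‖iteratedFDerivWithin ℝ m f D x‖ ≤ M) ?_ ?_ ?_ ?_
    · exact ⟨0, by simp⟩
    · rintro S T hST ⟨M, hM⟩
      exact ⟨M, fun x hx => hM x ⟨hST hx.1, hx.2⟩⟩
    · rintro S T ⟨M, hM⟩ ⟨M', hM'⟩
      refine ⟨max M M', ?_⟩
      rintro x ⟨hx | hx, hxD⟩
      · exact (hM x ⟨hx, hxD⟩).trans (le_max_left _ _)
      · exact (hM' x ⟨hx, hxD⟩).trans (le_max_right _ _)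
    · intro x hx
      have h1 : ContDiffWithinAt ℝ m f (closure D) x := (hf x hx).of_le (by
        exact_mod_cast le_top)
      obtain ⟨u, hu, p, hp⟩ := contDiffWithinAt_nat.1 h1
      rw [insert_eq_of_mem hx] at hu
      have hxu : x ∈ u := mem_of_mem_nhdsWithin hx hu
      have hcont : ContinuousWithinAt (fun y => ‖p y m‖) u x :=
        ((hp.cont m le_rfl) x hxu).norm
      have hev : ∀ᶠ y in 𝓝[u] x, ‖p y m‖ < ‖p x m‖ + 1 :=
        hcont.eventually_lt_const (by linarith)
      have hev2 : ∀ᶠ y in 𝓝[closure D] x, y ∈ u ∧ ‖p y m‖ < ‖p x m‖ + 1 := by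
        have h3 : 𝓝[closure D] x ≤ 𝓝[u] x := nhdsWithin_le_iff.2 hu
        exact (Filter.eventually_mem_set.2 hu).and (h3 hev)
      obtain ⟨O, hO, hxO, hOu⟩ := mem_nhdsWithin.1 hev2
      refine ⟨O ∩ closure D, ?_, ‖p x m‖ + 1, ?_⟩
      · exact mem_nhdsWithin.2 ⟨O, hO, hxO, subset_rfl⟩
      · rintro y ⟨⟨hyO, -⟩, hyD⟩
        have hy := hOu ⟨hyO, subset_closure hyD⟩
        have hop : IsOpen (D ∩ O) := hD.inter hO
        have hsub : D ∩ O ⊆ u := fun z hz => (hOu ⟨hz.2, subset_closure hz.1⟩).1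
        have e1 : p y m = iteratedFDerivWithin ℝ m f (D ∩ O) y :=
          (hp.mono hsub).eq_iteratedFDerivWithin_of_uniqueDiffOn le_rfl hop.uniqueDiffOn
            ⟨hyD, hyO⟩
        rw [iteratedFDerivWithin_inter_open hO hyO] at e1
        rw [← e1]
        exact hy.2.le
  obtain ⟨M, hM⟩ := key
  exact ⟨M, fun x hx => hM x ⟨subset_closure hx, hx⟩⟩

lemma Hd.hDeriv {n : ℕ} {D : Set (Fin (2*n+1) → ℝ)} (hD : IsOpen D) (hb : IsBounded D)
    {f : (Fin (2*n+1) → ℝ) → ℝ} (h : Hd n D f) (j) : Hd n D (hDeriv n j f) := by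
  have hfd : ContDiffOn ℝ (⊤:ℕ∞) (fderivWithin ℝ f D) D :=
    h.1.fderivWithin hD.uniqueDiffOn (by simp)
  have hX : ContDiffOn ℝ (⊤:ℕ∞) (Xvec n j) D := (Xvec_contDiff n j).contDiffOn
  have heq : EqOn (_root_.hDeriv n j f) (fun y => fderivWithin ℝ f D y (Xvec n j y)) D := by
    intro y hy
    simp only [_root_.hDeriv, fderivWithin_of_isOpen hD hy]
  refine ⟨(hfd.clm_apply hX).congr heq, fun m => ?_⟩
  have hb1 : ∀ i : ℕ, ∃ M : ℝ, ∀ x ∈ D,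
      ‖iteratedFDerivWithin ℝ i (fderivWithin ℝ f D) D x‖ ≤ M := by
    intro i
    obtain ⟨M, hM⟩ := h.2 (i+1)
    refine ⟨M, fun x hx => ?_⟩
    rw [norm_iteratedFDerivWithin_fderivWithin hD.uniqueDiffOn hx]
    exact hM x hx
  have hb2 : ∀ i : ℕ, ∃ M : ℝ, ∀ x ∈ D, ‖iteratedFDerivWithin ℝ i (Xvec n j) D x‖ ≤ M :=
    fun i => bdd_of_closure hD hb (Xvec_contDiff n j).contDiffOn i
  choose M1 hM1 using hb1
  choose M2 hM2 using hb2
  refine ⟨∑ i ∈ Finset.range (m + 1), ↑(m.choose i) * M1 i * M2 (m - i), fun x hx => ?_⟩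
  rw [iteratedFDerivWithin_congr heq hx]
  refine (norm_iteratedFDerivWithin_clm_apply (N := (⊤:ℕ∞)) hfd hX hD.uniqueDiffOn hx
    (by exact_mod_cast le_top)).trans ?_
  have p1 : ∀ i, 0 ≤ M1 i := fun i => (norm_nonneg _).trans (hM1 i x hx)
  refine Finset.sum_le_sum fun i _ => ?_
  have := p1 i
  have q1 := hM1 i x hx
  have q2 := hM2 (m - i) x hx
  gcongr

lemma Hd.XI {n : ℕ} {D : Set (Fin (2*n+1) → ℝ)} (hD : IsOpen D) (hb : IsBounded D)
    {f : (Fin (2*n+1) → ℝ) → ℝ} (h : Hd n D f) (I) : Hd n D (XI n I f) := by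
  induction I with
  | nil => exact h
  | cons j I ih => exact ih.hDeriv hD hb j

lemma Hd.gd {n : ℕ} {D : Set (Fin (2*n+1) → ℝ)} (hD : IsOpen D) (hb : IsBounded D)
    {f : (Fin (2*n+1) → ℝ) → ℝ} (h : Hd n D f) : Gd n D f := by
  intro I
  have h2 := h.XI hD hb I
  obtain ⟨M, hM⟩ := h2.2 0
  refine ⟨h2.1.continuousOn, M, fun x hx => ?_⟩
  have := hM x hx
  rwa [norm_iteratedFDerivWithin_zero] at this

lemma cut_TS {n : ℕ} {D : Set (Fin (2*n+1) → ℝ)} (hD : IsOpen D)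
    {χ f : (Fin (2*n+1) → ℝ) → ℝ} (hχ : TS n χ) (hs : tsupport χ ⊆ D)
    (hf : ContDiffOn ℝ (⊤:ℕ∞) f D) : TS n (fun x => χ x * f x) := by
  refine ⟨?_, hχ.2.mul_right⟩
  rw [contDiff_iff_contDiffAt]
  intro x
  by_cases hx : x ∈ tsupport χ
  · exact hχ.1.contDiffAt.mul (hf.contDiffAt (hD.mem_nhds (hs hx)))
  · have : (fun x => χ x * f x) =ᶠ[𝓝 x] fun _ => 0 := by
      have h0 := notMem_tsupport_iff_eventuallyEq.1 hx
      filter_upwards [h0] with y hy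
      simp [hy]
    exact contDiffAt_const.congr_of_eventuallyEq this

lemma tsupport_hDeriv {n : ℕ} (j) (u : (Fin (2*n+1) → ℝ) → ℝ) :
    tsupport (hDeriv n j u) ⊆ tsupport u := by
  refine closure_minimal ?_ (isClosed_tsupport u)
  intro x hx
  have : x ∈ support (fderiv ℝ u) := by
    simp only [mem_support, ne_eq, _root_.hDeriv] at hx ⊢
    intro h
    rw [h] at hx
    simp at hx
  exact support_fderiv_subset ℝ this

lemma eN_zero_of_notMem {n : ℕ} (k : ℕ) {u : (Fin (2*n+1) → ℝ) → ℝ} {x} (hx : x ∉ tsupport u) :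
    eN n k u x = 0 := by
  induction k generalizing u with
  | zero => simp [eN, image_eq_zero_of_notMem_tsupport hx]
  | succ k ih =>
    simp only [eN, image_eq_zero_of_notMem_tsupport hx]
    rw [Finset.sum_eq_zero fun j _ => ih fun h => hx (tsupport_hDeriv j u h)]
    simp

lemma hDeriv_contDiffOn {n : ℕ} {D : Set (Fin (2*n+1) → ℝ)} (hD : IsOpen D)
    {f : (Fin (2*n+1) → ℝ) → ℝ} (hf : ContDiffOn ℝ (⊤:ℕ∞) f D) (j) :
    ContDiffOn ℝ (⊤:ℕ∞) (hDeriv n j f) D :=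
  (hf.fderiv_of_isOpen hD (by simp)).clm_apply (Xvec_contDiff n j).contDiffOn

lemma cut {n : ℕ} {D : Set (Fin (2*n+1) → ℝ)} (hD : IsOpen D) (k : ℕ)
    {χ : (Fin (2*n+1) → ℝ) → ℝ} (hχ : TS n χ) (hs : tsupport χ ⊆ D) :
    ∃ C : ℝ≥0∞, C ≠ ∞ ∧ ∀ f, ContDiffOn ℝ (⊤:ℕ∞) f D → ∀ x,
      eN n k (fun y => χ y * f y) x ≤ C * eN n k f x := by
  induction k generalizing χ with
  | zero =>
    obtain ⟨M, hM⟩ := hχ.2.exists_bound_of_continuous hχ.1.continuous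
    refine ⟨ENNReal.ofReal M ^ 2, by finiteness, fun f hf x => ?_⟩
    simp only [eN, enorm_mul, mul_pow]
    gcongr
    rw [← ofReal_norm]
    exact ENNReal.ofReal_le_ofReal (hM x)
  | succ k ih =>
    obtain ⟨M, hM⟩ := hχ.2.exists_bound_of_continuous hχ.1.continuous
    obtain ⟨C0, hC0, H0⟩ := ih hχ hs
    have := fun j => ih (hχ.hDeriv j) ((tsupport_hDeriv j χ).trans hs)
    choose C1 hC1 H1 using this
    refine ⟨ENNReal.ofReal M ^ 2 + ∑ j, 2 * (C1 j + C0), ?_, fun f hf x => ?_⟩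
    · refine ENNReal.add_ne_top.2 ⟨by finiteness, ?_⟩
      refine ENNReal.sum_ne_top.2 fun j _ => ?_
      have := hC1 j
      finiteness
    · have hmul : ∀ j, hDeriv n j (fun y => χ y * f y)
          = fun y => hDeriv n j χ y * f y + χ y * hDeriv n j f y := by
        intro j
        funext y
        by_cases hy : y ∈ tsupport χ
        · exact hDeriv_mul j (hχ.diff y)
            ((hf.contDiffAt (hD.mem_nhds (hs hy))).differentiableAt (by simp))
        · have h1 : y ∉ tsupport (fun y => χ y * f y) :=
            fun h => hy (tsupport_mul_subset_left h)
          rw [image_eq_zero_of_notMem_tsupport hy,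
            image_eq_zero_of_notMem_tsupport fun h => hy (tsupport_hDeriv j χ h),
            image_eq_zero_of_notMem_tsupport fun h => h1 (tsupport_hDeriv j _ h)]
          simp
      rw [add_mul, Finset.sum_mul]
      conv_lhs => rw [eN]
      refine add_le_add ?_ (Finset.sum_le_sum fun j _ => ?_)
      · refine le_trans ?_ (mul_le_mul_right (eN_base (k+1) f x) _)
        simp only [enorm_mul, mul_pow]
        gcongr
        rw [← ofReal_norm]
        exact ENNReal.ofReal_le_ofReal (hM x)
      · rw [hmul]
        have t1 := cut_TS hD (hχ.hDeriv j) ((tsupport_hDeriv j χ).trans hs) hf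
        have t2 := cut_TS hD hχ hs (hDeriv_contDiffOn hD hf j)
        refine (eN_add k t1 t2 x).trans ?_
        rw [mul_assoc, add_mul]
        gcongr
        · exact (H1 j f hf x).trans (by gcongr; exact eN_mono (by omega) f x)
        · exact (H0 _ (hDeriv_contDiffOn hD hf j) x).trans (by gcongr; exact eN_hDeriv k j f x)

lemma cutQ {n : ℕ} {D : Set (Fin (2*n+1) → ℝ)} (hD : IsOpen D) (k : ℕ)
    {χ : (Fin (2*n+1) → ℝ) → ℝ} (hχ : TS n χ) (hs : tsupport χ ⊆ D) :
    ∃ C : ℝ≥0∞, C ≠ ∞ ∧ ∀ f, ContDiffOn ℝ (⊤:ℕ∞) f D →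
      eQ n k (fun y => χ y * f y) ≤ C * ∫⁻ x in D, eN n k f x := by
  obtain ⟨C, hC, H⟩ := cut hD k hχ hs
  refine ⟨C, hC, fun f hf => ?_⟩
  rw [← lintegral_const_mul' _ _ hC, ← lintegral_indicator hD.measurableSet]
  refine lintegral_mono fun x => ?_
  by_cases hx : x ∈ D
  · rw [indicator_of_mem hx]; exact H f hf x
  · rw [eN_zero_of_notMem]
    · exact zero_le
    · exact fun h => hx (hs (tsupport_mul_subset_left h))

lemma XI_congr {n : ℕ} {D : Set (Fin (2*n+1) → ℝ)} (hD : IsOpen D)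
    {f g : (Fin (2*n+1) → ℝ) → ℝ} (h : EqOn f g D) (I) : EqOn (XI n I f) (XI n I g) D := by
  induction I with
  | nil => exact h
  | cons j I ih =>
    intro x hx
    have : XI n I f =ᶠ[𝓝 x] XI n I g := ih.eventuallyEq_of_mem (hD.mem_nhds hx)
    simp only [XI, _root_.hDeriv, this.fderiv_eq]

lemma fsNormSq_congr {n : ℕ} {D : Set (Fin (2*n+1) → ℝ)} (hD : IsOpen D) (k : ℕ)
    {f g : (Fin (2*n+1) → ℝ) → ℝ} (h : EqOn f g D) : fsNormSq n D k f = fsNormSq n D k g := by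
  unfold fsNormSq
  refine Finset.sum_congr rfl fun t _ => Finset.sum_congr rfl fun I _ => ?_
  refine setIntegral_congr_fun hD.measurableSet fun x hx => ?_
  simp only [XI_congr hD h _ hx]

lemma exists_cut {n : ℕ} {D D' : Set (Fin (2*n+1) → ℝ)} (hD : IsOpen D) (hD'b : IsBounded D')
    (hsub : closure D' ⊆ D) : ∃ χ, TS n χ ∧ tsupport χ ⊆ D ∧ ∀ x ∈ D', χ x = 1 := by
  obtain ⟨W, hW, h1, h2, h3⟩ :=
    exists_open_between_and_isCompact_closure hD'b.isCompact_closure hD hsub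
  obtain ⟨χ, hχ, -, h0, h1'⟩ := exists_contMDiff_zero_iff_one_iff_of_isClosed
    (n := (⊤:ℕ∞)) (modelWithCornersSelf ℝ (Fin (2*n+1) → ℝ))
    (s := Wᶜ) (t := closure D') hW.isClosed_compl isClosed_closure
    (disjoint_compl_left_iff_subset.2 h1)
  have hsupp : support χ ⊆ W := by
    intro x hx
    by_contra hxW
    exact hx ((h0 x).1 hxW)
  have hts : tsupport χ ⊆ closure W := closure_mono hsupp
  refine ⟨χ, ⟨hχ.contDiff, ?_⟩, hts.trans h2, fun x hx => (h1' x).1 (subset_closure hx)⟩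
  exact h3.of_isClosed_subset (isClosed_tsupport χ) hts


/-- for `s > 2n+4`,
`‖f₁⋯f_p‖_{D′,s} ≤ C Σ_j ‖f_j‖_{D,s} Π_{i≠j} ‖f_i‖_{D,s−1}`. -/
theorem statement7 (n s p : ℕ) (hn : 1 ≤ n) (hs : 2*n+4 < s) (hp : 1 ≤ p)
    (D D' : Set (Fin (2*n+1) → ℝ)) (hD : IsOpen D) (hDb : IsBounded D)
    (hD' : IsOpen D') (hD'b : IsBounded D') (hsub : closure D' ⊆ D) :
    ∃ C > (0:ℝ), ∀ f : Fin p → ((Fin (2*n+1) → ℝ) → ℝ),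
      (∀ i, ContDiffOn ℝ (⊤:ℕ∞) (f i) (closure D)) →
      fsNorm n D' s (fun x => ∏ i, f i x) ≤
        C * ∑ j : Fin p, fsNorm n D s (f j) *
              ∏ i ∈ Finset.univ.erase j, fsNorm n D (s-1) (f i) := by
  obtain ⟨r, rfl⟩ : ∃ r, s = r + 1 := ⟨s - 1, by omega⟩
  simp only [Nat.add_sub_cancel]
  haveI : Nonempty (Fin p) := ⟨⟨0, hp⟩⟩
  obtain ⟨χ, hχ, hχD, hχ1⟩ := exists_cut hD hD'b hsub
  obtain ⟨C, hC, H⟩ := prodMain hn r (by omega) (σ := (Finset.univ : Finset (Fin p)))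
    Finset.univ_nonempty
  obtain ⟨Cs, hCs, Hs⟩ := cutQ hD (r+1) hχ hχD
  obtain ⟨Cr, hCr, Hr⟩ := cutQ hD r hχ hχD
  set K : ℝ≥0∞ := C * (Cs * Cr ^ (p-1)) with hK
  have hKt : K ≠ ∞ := by rw [hK]; finiteness
  refine ⟨Real.sqrt K.toReal + 1, by positivity, fun f hf => ?_⟩
  have hf' : ∀ i, ContDiffOn ℝ (⊤:ℕ∞) (f i) D := fun i => (hf i).mono subset_closure
  have hg : ∀ i, Gd n D (f i) := fun i =>
    Hd.gd hD hDb ⟨hf' i, fun m => bdd_of_closure hD hDb (hf i) m⟩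
  have hF : ∀ i, TS n (fun x => χ x * f i x) := fun i => cut_TS hD hχ hχD (hf' i)
  have hP : TS n (fun x => ∏ i, χ x * f i x) :=
    TS.prod (F := fun i x => χ x * f i x) Finset.univ_nonempty hF
  have hcongr : fsNormSq n D' (r+1) (fun x => ∏ i, f i x)
      = fsNormSq n D' (r+1) (fun x => ∏ i, χ x * f i x) := by
    apply fsNormSq_congr hD'
    intro x hx
    simp [hχ1 x hx]
  set a : Fin p → ℝ := fun j => fsNormSq n D (r+1) (f j) *
    ∏ i ∈ Finset.univ.erase j, fsNormSq n D r (f i) with ha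
  have ha0 : ∀ j, 0 ≤ a j := fun j => mul_nonneg (fsNormSq_nonneg' _ _ _)
    (Finset.prod_nonneg fun i _ => fsNormSq_nonneg' _ _ _)
  have h1 : ENNReal.ofReal (fsNormSq n D' (r+1) (fun x => ∏ i, f i x))
      ≤ K * ENNReal.ofReal (∑ j, a j) := by
    rw [hcongr, (hP.gd D').bridge hD'.measurableSet hD'b]
    refine (setLIntegral_le_lintegral _ _).trans ((H _ hF).trans ?_)
    rw [hK, mul_assoc]
    gcongr
    rw [ENNReal.ofReal_sum_of_nonneg fun j _ => ha0 j, Finset.mul_sum]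
    refine Finset.sum_le_sum fun j _ => ?_
    rw [ha, ENNReal.ofReal_mul (fsNormSq_nonneg' _ _ _),
      ENNReal.ofReal_prod_of_nonneg fun i _ => fsNormSq_nonneg' _ _ _,
      (hg j).bridge hD.measurableSet hDb]
    simp only [fun i => (hg i).bridge hD.measurableSet hDb r]
    calc _ ≤ (Cs * ∫⁻ x in D, eN n (r+1) (f j) x) *
          ∏ i ∈ Finset.univ.erase j, (Cr * ∫⁻ x in D, eN n r (f i) x) := by
          refine mul_le_mul' (Hs _ (hf' j)) (Finset.prod_le_prod' fun i _ => Hr _ (hf' i))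
      _ = _ := by
          rw [Finset.prod_mul_distrib, Finset.prod_const,
            Finset.card_erase_of_mem (Finset.mem_univ j), Finset.card_univ, Fintype.card_fin]
          ring
  have hS0 : 0 ≤ ∑ j, a j := Finset.sum_nonneg fun j _ => ha0 j
  have h2 : fsNormSq n D' (r+1) (fun x => ∏ i, f i x) ≤ K.toReal * ∑ j, a j := by
    rw [← ENNReal.ofReal_toReal hKt, ← ENNReal.ofReal_mul ENNReal.toReal_nonneg] at h1
    exact (ENNReal.ofReal_le_ofReal_iff (by positivity)).1 h1
  have h3 : ∀ j, fsNorm n D (r+1) (f j) * ∏ i ∈ Finset.univ.erase j, fsNorm n D r (f i)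
      = Real.sqrt (a j) := by
    intro j
    unfold fsNorm
    rw [ha, Real.sqrt_mul (fsNormSq_nonneg' _ _ _), Real.sqrt_prod _ fun i _ => fsNormSq_nonneg' _ _ _]
  simp only [h3]
  have h4 : Real.sqrt (∑ j, a j) ≤ ∑ j, Real.sqrt (a j) := by
    refine Real.sqrt_le_iff.2 ⟨Finset.sum_nonneg fun j _ => Real.sqrt_nonneg _, ?_⟩
    calc ∑ j, a j = ∑ j, Real.sqrt (a j) ^ 2 :=
          Finset.sum_congr rfl fun j _ => (Real.sq_sqrt (ha0 j)).symm
      _ ≤ _ := Finset.sum_sq_le_sq_sum_of_nonneg fun j _ => Real.sqrt_nonneg _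
  unfold fsNorm
  calc _ ≤ Real.sqrt (K.toReal * ∑ j, a j) := Real.sqrt_le_sqrt h2
    _ = Real.sqrt K.toReal * Real.sqrt (∑ j, a j) := Real.sqrt_mul ENNReal.toReal_nonneg _
    _ ≤ (Real.sqrt K.toReal + 1) * ∑ j, Real.sqrt (a j) := by
        gcongr
        linarith


end
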